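/- Let S be a profinite semigroup topologically generated by a finite subset A, and suppose S has only finitely many regular J-classes. Then S equals the subsemigroup generated algebraically (without taking closure) by A together with the set of group elements of S. Moreover, if S has only countably many group elements, then S equals the subsemigroup generated algebraically by A together with the set E(S) of idempotents of S. -/

import Mathlib

/-- A bundled finite semigroup. -/
structure FinSgp : Type 1 where
  carrier : Type
  [str : Semigroup carrier]
  [fin : Finite carrier]

attribute [instance] FinSgp.str FinSgp.fin

/-- Finite semigroups carry the discrete topology. -/
instance (T : FinSgp) : TopologicalSpace T.carrier := ⊥

instance (T : FinSgp) : DiscreteTopology T.carrier := ⟨rfl⟩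

/-- A pseudovariety of finite semigroups: a class of finite semigroups closed under
homomorphic images, (isomorphic copies of) subsemigroups, and binary direct products. -/
def IsPseudovariety (V : Set FinSgp) : Prop :=
  (∀ S ∈ V, ∀ (T : FinSgp) (f : S.carrier →ₙ* T.carrier), Function.Surjective f → T ∈ V) ∧
  (∀ S ∈ V, ∀ (T : FinSgp) (f : T.carrier →ₙ* S.carrier), Function.Injective f → T ∈ V) ∧
  (∀ S ∈ V, ∀ T ∈ V, (FinSgp.mk (S.carrier × T.carrier)) ∈ V)

/-- A profinite semigroup: a compact, Hausdorff, totally disconnected topological semigroup. -/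
def IsProfiniteSgp (S : Type) [Semigroup S] [TopologicalSpace S] : Prop :=
  ContinuousMul S ∧ CompactSpace S ∧ T2Space S ∧ TotallyDisconnectedSpace S

/-- A pro-V semigroup: a profinite semigroup whose points are separated by continuous
homomorphisms onto finite semigroups belonging to V. -/
def IsProV (V : Set FinSgp) (S : Type) [Semigroup S] [TopologicalSpace S] : Prop :=
  IsProfiniteSgp S ∧ ∀ x y : S, x ≠ y →
    ∃ (T : FinSgp) (f : S →ₙ* T.carrier),
      T ∈ V ∧ Continuous f ∧ Function.Surjective f ∧ f x ≠ f y

/-- `A` topologically generates the topological semigroup `S`. -/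
def TopGen (S : Type) [Semigroup S] [TopologicalSpace S] (A : Set S) : Prop :=
  closure ((Subsemigroup.closure A : Subsemigroup S) : Set S) = Set.univ

/-- A topological semigroup is locally countable if every closed subsemigroup
topologically generated by a finite subset is countable. -/
def IsLocCountable (S : Type) [Semigroup S] [TopologicalSpace S] : Prop :=
  ∀ A : Set S, A.Finite →
    (closure ((Subsemigroup.closure A : Subsemigroup S) : Set S)).Countable

/-- A pseudovariety is locally countable if every pro-V semigroup is locally countable. -/
def PVLocallyCountable (V : Set FinSgp) : Prop :=
  ∀ (S : Type) [Semigroup S] [TopologicalSpace S], IsProV V S → IsLocCountable S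

/-- A pseudovariety is locally finite if every finitely generated pro-V semigroup is finite. -/
def PVLocallyFinite (V : Set FinSgp) : Prop :=
  ∀ (S : Type) [Semigroup S] [TopologicalSpace S], IsProV V S →
    (∃ A : Set S, A.Finite ∧ TopGen S A) → Finite S

/-- The join of two pseudovarieties: the smallest pseudovariety containing both. -/
def PVJoin (V W : Set FinSgp) : Set FinSgp :=
  ⋂₀ {U | IsPseudovariety U ∧ V ⊆ U ∧ W ⊆ U}

/-- The preimage of an idempotent under a semigroup homomorphism, as a subsemigroup. -/
def idemFiber {S T : Type} [Semigroup S] [Semigroup T] (f : S →ₙ* T)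
    (e : T) (he : e * e = e) : Subsemigroup S where
  carrier := f ⁻¹' {e}
  mul_mem' := fun {a b} ha hb => by
    simp only [Set.mem_preimage, Set.mem_singleton_iff] at ha hb ⊢
    rw [map_mul, ha, hb, he]

/-- A subsemigroup of a finite semigroup, as a bundled finite semigroup. -/
def subFinSgp {S : Type} [Semigroup S] [Finite S] (T : Subsemigroup S) : FinSgp :=
  FinSgp.mk T

/-- The generators of the Mal'cev product `V ⓜ W`: finite semigroups `S` admitting a
homomorphism onto some `T ∈ W` whose fibers over idempotents lie in `V`. -/
def MalcevWitness (V W : Set FinSgp) (S : FinSgp) : Prop :=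
  ∃ (T : FinSgp) (f : S.carrier →ₙ* T.carrier), T ∈ W ∧
    ∀ (e : T.carrier) (he : e * e = e), subFinSgp (idemFiber f e he) ∈ V

/-- The Mal'cev product of two pseudovarieties: the smallest pseudovariety containing
all its generators. -/
def Malcev (V W : Set FinSgp) : Set FinSgp :=
  ⋂₀ {U | IsPseudovariety U ∧ ∀ S : FinSgp, MalcevWitness V W S → S ∈ U}

/-- Green's preorder `≤_L`. -/
def lLE {S : Type} [Semigroup S] (u v : S) : Prop := u = v ∨ ∃ x, u = x * v

/-- Green's relation `L`. -/
def GreenL {S : Type} [Semigroup S] (u v : S) : Prop := lLE u v ∧ lLE v u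

/-- Green's preorder `≤_J`. -/
def jLE {S : Type} [Semigroup S] (u v : S) : Prop :=
  u = v ∨ (∃ x, u = v * x) ∨ (∃ x, u = x * v) ∨ (∃ x y, u = x * v * y)

/-- Green's relation `J`. -/
def GreenJ {S : Type} [Semigroup S] (u v : S) : Prop := jLE u v ∧ jLE v u

/-- A regular element of a semigroup. -/
def IsRegularElt {S : Type} [Semigroup S] (s : S) : Prop := ∃ t, s = s * t * s

/-- `S` has only finitely many regular `J`-classes. -/
def FinManyRegJ (S : Type) [Semigroup S] : Prop :=
  ∃ F : Set S, F.Finite ∧ ∀ s : S, IsRegularElt s → ∃ t ∈ F, GreenJ s t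

/-- A subgroup of a semigroup: a subsemigroup which is a group under the induced
multiplication. -/
def IsSgpSubgroup (S : Type) [Semigroup S] (G : Set S) : Prop :=
  (∀ x ∈ G, ∀ y ∈ G, x * y ∈ G) ∧
  ∃ e ∈ G, (∀ x ∈ G, e * x = x ∧ x * e = x) ∧ (∀ x ∈ G, ∃ y ∈ G, x * y = e ∧ y * x = e)

/-- A group element of a semigroup: an element lying in some subgroup. -/
def IsGroupElt (S : Type) [Semigroup S] (s : S) : Prop :=
  ∃ G : Set S, IsSgpSubgroup S G ∧ s ∈ G

/-- `prodFrom f n` is the product `f 0 * f 1 * ⋯ * f n`. -/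
def prodFrom {S : Type} [Semigroup S] (f : ℕ → S) : ℕ → S
  | 0 => f 0
  | n + 1 => prodFrom f n * f (n + 1)

/-- A semigroup is nilpotent if it has a zero element and some length bound beyond
which all products equal zero. -/
def IsNilpotentSgp (S : Type) [Semigroup S] : Prop :=
  ∃ z : S, (∀ x : S, z * x = z ∧ x * z = z) ∧ ∃ n : ℕ, ∀ f : ℕ → S, prodFrom f n = z

/-- The pseudovariety `N` of finite nilpotent semigroups. -/
def NPv : Set FinSgp := {S | IsNilpotentSgp S.carrier}

/-- A semigroup which is a group. -/
def IsGroupSgp (S : Type) [Semigroup S] : Prop :=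
  ∃ e : S, (∀ x : S, e * x = x ∧ x * e = x) ∧ ∀ x : S, ∃ y : S, x * y = e ∧ y * x = e

/-- The pseudovariety `LG` of finite local groups: `eSe` is a group for each idempotent `e`. -/
def LG : Set FinSgp :=
  {S | ∀ e : S.carrier, e * e = e → ∀ s : S.carrier,
      ∃ t : S.carrier, (e * s * e) * (e * t * e) = e ∧ (e * t * e) * (e * s * e) = e}

/-- The pseudovariety `IE` of finite semigroups with exactly one idempotent. -/
def IE : Set FinSgp := {S | ∃! e : S.carrier, e * e = e}

/-- A bundled topological semigroup (carrier, multiplication, topology). -/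
structure TopSgp : Type 1 where
  carrier : Type
  [str : Semigroup carrier]
  [top : TopologicalSpace carrier]

attribute [instance] TopSgp.str TopSgp.top

/-- The fiber of a relational morphism over an idempotent, as a subsemigroup of the
domain. -/
def relFiber {S T : Type} [Semigroup S] [Semigroup T] (μ : Subsemigroup (S × T))
    (e : T) (he : e * e = e) : Subsemigroup S where
  carrier := {s | (s, e) ∈ μ}
  mul_mem' := fun {a b} ha hb => by
    have h := μ.mul_mem ha hb
    simpa [Prod.mk_mul_mk, he] using h

/-- `spow x n = x ^ (n + 1)` in a semigroup. -/
def spow {S : Type} [Semigroup S] (x : S) : ℕ → S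
  | 0 => x
  | n + 1 => spow x n * x

/-- The pseudovariety `A ∩ ESl` of finite aperiodic semigroups with commuting idempotents. -/
def AESl : Set FinSgp :=
  {S | (∃ n : ℕ, ∀ x : S.carrier, spow x (n + 1) = spow x n) ∧
       (∀ e f : S.carrier, e * e = e → f * f = f → e * f = f * e)}


/-!
Call `x` invertible at an idempotent `e` if it is a unit of the monoid `eSe`. If `e` is isolated
among the idempotents below it, as happens when there are only finitely many regular `J`-classes,
then all elements of `eSe` close to `e` are invertible at `e`; if moreover the subgroups are
countable, Baire's theorem shows that `e` is isolated in `eSe`. In both cases the subsemigroup `T`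
in question contains the inverses at `e` of all elements of `eSe` close to `e`.

Such a `T` contains all regular elements, and its complement is stable under limits from `J`-below.
By compactness, `T ≠ ⊤` would then give an element `s ∉ T` that is `J`-maximal outside `T`. As `s`
is not regular, at most one factor of each factorization `s = u * v` lies outside `T`. The two kinds
of factorizations with a factor outside `T` are separated by a neighbourhood of one of them.
Approximating `s` by words in the generators and moving a cut along such a word, one leaves this
neighbourhood at a single generator: in the limit `s = u * a * v` with `u`, `a` and `v` all in `T`,
a contradiction.
-/

open Topology Filter Set

/-! ### Maximal elements in compact preordered spaces -/

section CompactOrder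

variable {X : Type*} [TopologicalSpace X] [CompactSpace X] [Preorder X] [ClosedIciTopology X]

theorem exists_mem_closure_mem_upperBounds {c : Set X} (hc : DirectedOn (· ≤ ·) c)
    (hne : c.Nonempty) : ∃ t ∈ closure c, t ∈ upperBounds c := by
  have : Nonempty c := hne.to_subtype
  have : IsDirectedOrder c := ⟨directedOn_iff_directed.1 hc⟩
  obtain ⟨t, ht⟩ := exists_clusterPt_of_compactSpace (map ((↑) : c → X) atTop)
  have mem_of_eventually {s : Set X} (hs : IsClosed s) (h : ∀ᶠ x : c in atTop, (x : X) ∈ s) :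
      t ∈ s :=
    isClosed_iff_clusterPt.1 hs t (ht.mono (le_principal_iff.2 h))
  exact ⟨t, mem_of_eventually isClosed_closure (.of_forall fun x => subset_closure x.2),
    fun a ha => mem_of_eventually isClosed_Ici (eventually_ge_atTop (⟨a, ha⟩ : c))⟩

theorem exists_maximal_mem_of_eventually_notMem {U : Set X}
    (hU : ∀ t ∉ U, ∀ᶠ s in 𝓝[≤] t, s ∉ U) (hne : U.Nonempty) : ∃ m, Maximal (· ∈ U) m := by
  obtain ⟨x, hx⟩ := hne
  obtain ⟨m, -, hm⟩ := zorn_le_nonempty₀ U (fun c hcU hc y hy => by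
    obtain ⟨t, htc, hct⟩ := exists_mem_closure_mem_upperBounds hc.directedOn ⟨y, hy⟩
    refine ⟨t, by_contra fun htU => ?_, hct⟩
    obtain ⟨s, hsc, hs⟩ := ((mem_closure_iff_frequently.1 htc).and_eventually
      (eventually_nhdsWithin_iff.1 (hU t htU))).exists
    exact hs (hct hsc) (hcU hsc)) x hx
  exact ⟨m, hm⟩

end CompactOrder

/-! ### Compact semigroups and their actions -/

section CompactAction

variable {M : Type*} [Semigroup M] [TopologicalSpace M] [ContinuousMul M] [CompactSpace M]
  [T2Space M]

theorem exists_commute_isIdempotentElem_mul {Q : Subsemigroup M} (hQ : IsClosed (Q : Set M))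
    {m : M} (hm : m ∈ Q) : ∃ k ∈ Q, Commute m k ∧ IsIdempotentElem (m * k) := by
  let C : Subsemigroup M := Q ⊓ Subsemigroup.centralizer {m}
  have hC : IsClosed (C : Set M) := hQ.inter (isClosed_centralizer {m})
  have mem_C {k : M} : k ∈ C ↔ k ∈ Q ∧ m * k = k * m := by
    simp [C, Subsemigroup.mem_centralizer_iff]
  obtain ⟨_, ⟨k, hk, rfl⟩, hidem⟩ := exists_idempotent_in_compact_subsemigroup
    (fun r : M => by fun_prop) ((m * ·) '' (C : Set M)) ⟨_, m, mem_C.2 ⟨hm, rfl⟩, rfl⟩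
    (hC.isCompact.image (by fun_prop)) (by
      rintro _ ⟨a, ha, rfl⟩ _ ⟨b, hb, rfl⟩
      exact ⟨a * m * b, mul_mem (mul_mem ha (mem_C.2 ⟨hm, rfl⟩)) hb, by simp only [mul_assoc]⟩)
  exact ⟨k, (mem_C.1 hk).1, (mem_C.1 hk).2, hidem⟩

variable {X : Type*} [TopologicalSpace X] [T2Space X] [SemigroupAction M X] {t : X}

theorem exists_commute_isIdempotentElem_mul_of_smul_eq (hc : Continuous fun m : M => m • t) {m : M}
    (hm : m • t = t) : ∃ k : M, k • t = t ∧ Commute m k ∧ IsIdempotentElem (m * k) := by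
  let stabilizer : Subsemigroup M :=
    { carrier := {n | n • t = t}
      mul_mem' := fun {a b} (ha : a • t = t) (hb : b • t = t) => by
        rw [mem_ofPred_eq, mul_smul, hb, ha] }
  exact exists_commute_isIdempotentElem_mul (Q := stabilizer) (isClosed_eq hc continuous_const) hm

theorem mem_nhdsWithin_orbit_of_eventually_smul_mem (hc : Continuous fun m : M => m • t) {U : Set X}
    (hU : ∀ e : M, IsIdempotentElem e → ∀ᶠ n in 𝓝 e, n * e = n → n • t ∈ U) :
    U ∈ 𝓝[MulAction.orbit M t] t := by
  have eventually_mem {m : M} (hm : m • t = t) : ∀ᶠ n in 𝓝 m, n • t ∈ U := by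
    obtain ⟨k, hk, -, hidem⟩ := exists_commute_isIdempotentElem_mul_of_smul_eq hc hm
    have hlim : Tendsto (fun n => n * (k * (m * k))) (𝓝 m) (𝓝 (m * k)) := by
      have h := (continuous_mul_const (k * (m * k))).tendsto m
      rwa [← mul_assoc m, hidem.eq] at h
    filter_upwards [hlim.eventually (hU _ hidem)] with n hn
    have h := hn (by simp only [mul_assoc, hidem.eq])
    rwa [mul_smul, mul_smul, mul_smul, hk, hm, hk] at h
  have hK : IsClosed ((· • t) '' (interior {m : M | m • t ∈ U})ᶜ) :=
    (isOpen_interior.isClosed_compl.isCompact.image hc).isClosed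
  have ht : t ∉ (· • t) '' (interior {m : M | m • t ∈ U})ᶜ := by
    rintro ⟨m, hm, hmt⟩
    exact hm (mem_interior_iff_mem_nhds.2 (eventually_mem hmt))
  filter_upwards [mem_nhdsWithin_of_mem_nhds (hK.isOpen_compl.mem_nhds ht), self_mem_nhdsWithin]
  rintro _ hK ⟨m, rfl⟩
  by_contra hmU
  exact hK ⟨m, fun hm => hmU (interior_subset (s := {m : M | m • t ∈ U}) hm), rfl⟩

end CompactAction

section Translations

/-- The action of a semigroup `S` on itself by left translations. -/
abbrev leftTranslation (S : Type*) [Semigroup S] : SemigroupAction S S where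
  smul m s := m * s
  mul_smul := mul_assoc

/-- The action of `Sᵐᵒᵖ` on a semigroup `S` by right translations. -/
abbrev rightTranslation (S : Type*) [Semigroup S] : SemigroupAction Sᵐᵒᵖ S where
  smul m s := s * m.unop
  mul_smul m n s := (mul_assoc s n.unop m.unop).symm

/-- The action of `S × Sᵐᵒᵖ` on a semigroup `S` by simultaneous left and right translations. Like
`leftTranslation` and `rightTranslation` it is used as a local instance; their orbits at `t` are
`S * t`, `t * S` and `S * t * S`, which together with `t` itself make up the elements `J`-below
`t`. -/
abbrev twoSidedTranslation (S : Type*) [Semigroup S] : SemigroupAction (S × Sᵐᵒᵖ) S where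
  smul m s := m.1 * s * m.2.unop
  mul_smul m n s := by
    change m.1 * n.1 * s * (n.2.unop * m.2.unop) = m.1 * (n.1 * s * n.2.unop) * m.2.unop
    simp only [mul_assoc]

variable {S : Type*} [Semigroup S] [TopologicalSpace S] [ContinuousMul S]

theorem continuous_twoSidedTranslation (t : S) :
    Continuous fun m : S × Sᵐᵒᵖ => m.1 * t * m.2.unop := by
  fun_prop

variable [CompactSpace S] [T2Space S]

theorem exists_mul_eq_of_mul_mul_eq {x y t : S} (h : x * t * y = t) :
    (∃ a, a * (x * t) = t) ∧ ∃ b, t * y * b = t := by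
  let := twoSidedTranslation S
  obtain ⟨⟨a, b⟩, hab, hcomm, hidem⟩ := exists_commute_isIdempotentElem_mul_of_smul_eq
    (m := (x, MulOpposite.op y)) (continuous_twoSidedTranslation t) h
  have hxa : x * a = a * x := congrArg Prod.fst hcomm
  have hyb : b.unop * y = y * b.unop := congrArg (fun m => m.2.unop) hcomm
  have hax : a * x * (a * x) = a * x := hxa ▸ congrArg Prod.fst hidem
  have hby : y * b.unop * (y * b.unop) = y * b.unop :=
    hyb ▸ congrArg (fun m => m.2.unop) hidem
  have hfix : a * x * t * (y * b.unop) = t := by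
    calc a * x * t * (y * b.unop) = a * (x * t * y) * b.unop := by simp only [mul_assoc]
      _ = t := by rw [h]; exact hab
  refine ⟨⟨a, ?_⟩, b.unop, ?_⟩
  · calc a * (x * t) = a * x * (a * x * t * (y * b.unop)) := by rw [hfix, mul_assoc]
      _ = a * x * (a * x) * t * (y * b.unop) := by simp only [mul_assoc]
      _ = t := by rw [hax, hfix]
  · calc t * y * b.unop = a * x * t * (y * b.unop) * (y * b.unop) := by rw [hfix, mul_assoc]
      _ = t := by rw [mul_assoc _ (y * b.unop), hby, hfix]

end Translations

/-! ### Green's relation `J` in compact semigroups -/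

section GreenJ

variable {S : Type} [Semigroup S]

theorem jLE_iff_withOne {u v : S} :
    jLE u v ↔ ∃ x y : WithOne S, (u : WithOne S) = x * v * y := by
  constructor
  · rintro (rfl | ⟨x, rfl⟩ | ⟨x, rfl⟩ | ⟨x, y, rfl⟩)
    · exact ⟨1, 1, by simp⟩
    · exact ⟨1, x, by simp⟩
    · exact ⟨x, 1, by simp⟩
    · exact ⟨x, y, by simp⟩
  · rintro ⟨x, y, h⟩
    induction x using WithOne.recOneCoe <;> induction y using WithOne.recOneCoe <;>
      simp only [one_mul, mul_one, ← WithOne.coe_mul, WithOne.coe_inj] at h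
    · exact .inl h
    · exact .inr (.inl ⟨_, h⟩)
    · exact .inr (.inr (.inl ⟨_, h⟩))
    · exact .inr (.inr (.inr ⟨_, _, h⟩))

theorem jLE.trans {u v w : S} (huv : jLE u v) (hvw : jLE v w) : jLE u w := by
  rw [jLE_iff_withOne] at *
  obtain ⟨x, y, hu⟩ := huv
  obtain ⟨x', y', hv⟩ := hvw
  exact ⟨x * x', y' * y, by simp only [hu, hv, mul_assoc]⟩

/-- Green's preorder `≤_J` as a `Preorder`, to be used as a local instance. -/
abbrev jPreorder (S : Type) [Semigroup S] : Preorder S where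
  le := jLE
  le_refl _ := .inl rfl
  le_trans _ _ _ := jLE.trans

variable [TopologicalSpace S] [ContinuousMul S] [CompactSpace S] [T2Space S]

theorem isClosed_setOf_jLE : IsClosed {p : S × S | jLE p.1 p.2} := by
  have h : {p : S × S | jLE p.1 p.2} = range (fun v : S => (v, v)) ∪
      (range (fun q : S × S => (q.1 * q.2, q.1)) ∪ (range (fun q : S × S => (q.2 * q.1, q.1)) ∪
        range (fun q : S × S × S => (q.2.1 * q.1 * q.2.2, q.1)))) := by
    ext ⟨u, v⟩
    simp only [jLE, mem_ofPred_eq, mem_union, mem_range, Prod.mk.injEq, Prod.exists]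
    refine or_congr ?_ (or_congr ?_ (or_congr ?_ ?_)) <;> aesop
  rw [h]
  exact (isCompact_range (by fun_prop)).isClosed.union
    ((isCompact_range (by fun_prop)).isClosed.union
      ((isCompact_range (by fun_prop)).isClosed.union (isCompact_range (by fun_prop)).isClosed))

theorem isClosed_setOf_greenJ (t : S) : IsClosed {x | GreenJ x t} :=
  (isClosed_setOf_jLE.preimage (by fun_prop : Continuous fun x : S => (x, t))).inter
    (isClosed_setOf_jLE.preimage (by fun_prop : Continuous fun x : S => (t, x)))

theorem exists_eq_mul_right_of_jLE {u v : S} (h : jLE u (u * v)) : ∃ z, u = u * v * z := by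
  obtain h | h | ⟨x, h⟩ | ⟨x, y, h⟩ := h
  · exact ⟨v, by rw [← h, ← h]⟩
  · exact h
  · obtain ⟨-, b, hb⟩ := exists_mul_eq_of_mul_mul_eq ((mul_assoc x u v).trans h.symm)
    exact ⟨b, hb.symm⟩
  · obtain ⟨-, b, hb⟩ := exists_mul_eq_of_mul_mul_eq (x := x) (t := u) (y := v * y)
      (by simpa only [mul_assoc] using h.symm)
    exact ⟨y * b, by simpa only [mul_assoc] using hb.symm⟩

theorem exists_eq_mul_left_of_jLE {u v : S} (h : jLE v (u * v)) : ∃ z, v = z * (u * v) := by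
  obtain h | ⟨y, h⟩ | h | ⟨x, y, h⟩ := h
  · exact ⟨u, by rw [← h, ← h]⟩
  · obtain ⟨⟨a, ha⟩, -⟩ := exists_mul_eq_of_mul_mul_eq h.symm
    exact ⟨a, ha.symm⟩
  · exact h
  · obtain ⟨⟨a, ha⟩, -⟩ := exists_mul_eq_of_mul_mul_eq (x := x * u) (t := v) (y := y)
      (by simpa only [mul_assoc] using h.symm)
    exact ⟨a * x, by simpa only [mul_assoc] using ha.symm⟩

theorem isRegularElt_mul_of_jLE {u v : S} (hu : jLE u (u * v)) (hv : jLE v (u * v)) :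
    IsRegularElt (u * v) := by
  obtain ⟨z, hz⟩ := exists_eq_mul_right_of_jLE hu
  obtain ⟨z', hz'⟩ := exists_eq_mul_left_of_jLE hv
  refine ⟨z * z', ?_⟩
  calc u * v = (u * v * z) * (z' * (u * v)) := by rw [← hz, ← hz']
    _ = u * v * (z * z') * (u * v) := by simp only [mul_assoc]

theorem eq_of_isIdempotentElem_of_jLE {e f : S} (hf : IsIdempotentElem f) (hef : e * f = f)
    (hfe : f * e = f) (hJ : jLE e f) : f = e := by
  obtain ⟨z, hz⟩ := exists_eq_mul_right_of_jLE (hef.symm ▸ hJ : jLE e (e * f))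
  rw [hef] at hz
  calc f = f * (f * z) := by rw [← hz, hfe]
    _ = e := by rw [← mul_assoc, hf.eq, ← hz]

theorem FinManyRegJ.eventually_idempotent_eq (hJ : FinManyRegJ S) {e : S}
    (he : IsIdempotentElem e) :
    ∀ᶠ f in 𝓝[Subsemigroup.corner e] e, IsIdempotentElem f → f = e := by
  obtain ⟨F, hF, hFreg⟩ := hJ
  have hO : IsOpen (⋂ t ∈ {t ∈ F | ¬ GreenJ e t}, {x | GreenJ x t}ᶜ) :=
    (hF.subset (sep_subset _ _)).isOpen_biInter fun t _ => (isClosed_setOf_greenJ t).isOpen_compl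
  filter_upwards [mem_nhdsWithin_of_mem_nhds (hO.mem_nhds (mem_iInter₂.2 fun t ht => ht.2)),
    self_mem_nhdsWithin] with f hfO hfe hf
  obtain ⟨hef, hfe⟩ := (Subsemigroup.mem_corner_iff he).1 hfe
  obtain ⟨t, htF, hft⟩ := hFreg f ⟨f, by rw [hf.eq, hf.eq]⟩
  have het : GreenJ e t := by_contra fun het => mem_iInter₂.1 hfO t ⟨htF, het⟩ hft
  exact eq_of_isIdempotentElem_of_jLE hf hef hfe (het.1.trans hft.2)

end GreenJ

/-! ### Invertibility at an idempotent -/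

section InverseAt

variable {S : Type*} [Semigroup S] {e x y x' y' : S}

/-- For an idempotent `e`, the elements `x` and `y` are mutually inverse in the monoid `eSe`. -/
structure IsInverseAt (e x y : S) : Prop where
  mem_left : x ∈ Subsemigroup.corner e
  mem_right : y ∈ Subsemigroup.corner e
  mul_eq : x * y = e
  mul_eq_symm : y * x = e

theorem IsInverseAt.refl (he : IsIdempotentElem e) : IsInverseAt e e e :=
  have h := (Subsemigroup.mem_corner_iff he).2 ⟨he, he⟩
  ⟨h, h, he, he⟩

theorem IsInverseAt.symm (h : IsInverseAt e x y) : IsInverseAt e y x :=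
  ⟨h.mem_right, h.mem_left, h.mul_eq_symm, h.mul_eq⟩

theorem IsInverseAt.mul (he : IsIdempotentElem e) (h : IsInverseAt e x y)
    (h' : IsInverseAt e x' y') : IsInverseAt e (x * x') (y' * y) where
  mem_left := mul_mem h.mem_left h'.mem_left
  mem_right := mul_mem h'.mem_right h.mem_right
  mul_eq := by
    rw [mul_assoc, ← mul_assoc x', h'.mul_eq, ((Subsemigroup.mem_corner_iff he).1 h.mem_right).1,
      h.mul_eq]
  mul_eq_symm := by
    rw [mul_assoc, ← mul_assoc y, h.mul_eq_symm,
      ((Subsemigroup.mem_corner_iff he).1 h'.mem_left).1, h'.mul_eq_symm]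

/-- The maximal subgroup `H_e` of a semigroup `S` at an idempotent `e`, i.e. the group of units
of `eSe`. -/
def maximalSubgroup (e : S) : Set S := {x | ∃ y, IsInverseAt e x y}

theorem isSgpSubgroup_maximalSubgroup {S : Type} [Semigroup S] {e : S} (he : IsIdempotentElem e) :
    IsSgpSubgroup S (maximalSubgroup e) :=
  ⟨fun _ ⟨_, hx⟩ _ ⟨_, hy⟩ => ⟨_, hx.mul he hy⟩, e, ⟨e, .refl he⟩,
    fun _ ⟨_, hx⟩ => (Subsemigroup.mem_corner_iff he).1 hx.mem_left,
    fun x ⟨y, hx⟩ => ⟨y, ⟨x, hx.symm⟩, hx.mul_eq, hx.mul_eq_symm⟩⟩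

variable [TopologicalSpace S] [ContinuousMul S]

theorem tendsto_mul_mul_nhdsWithin_corner (he : IsIdempotentElem e) :
    Tendsto (fun n => e * n * e) (𝓝 e) (𝓝[Subsemigroup.corner e] e) := by
  refine tendsto_nhdsWithin_iff.2 ⟨?_, .of_forall fun n => ⟨n, rfl⟩⟩
  have hc : Continuous fun n => e * n * e := by fun_prop
  simpa only [he.eq] using hc.tendsto e

variable [CompactSpace S] [T2Space S]

theorem isClosed_corner (e : S) : IsClosed (Subsemigroup.corner e : Set S) :=
  (isCompact_range (by fun_prop)).isClosed

theorem isCompact_maximalSubgroup (e : S) : IsCompact (maximalSubgroup e) := by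
  have hclosed : IsClosed {p : S × S | (p.1 ∈ Subsemigroup.corner e ∧ p.2 ∈ Subsemigroup.corner e) ∧
      p.1 * p.2 = e ∧ p.2 * p.1 = e} :=
    (((isClosed_corner e).preimage continuous_fst).inter
      ((isClosed_corner e).preimage continuous_snd)).inter
      ((isClosed_eq (by fun_prop) continuous_const).inter
        (isClosed_eq (by fun_prop) continuous_const))
  convert hclosed.isCompact.image continuous_fst using 1
  ext x
  constructor
  · rintro ⟨y, h⟩
    exact ⟨(x, y), ⟨⟨h.mem_left, h.mem_right⟩, h.mul_eq, h.mul_eq_symm⟩, rfl⟩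
  · rintro ⟨⟨_, y⟩, ⟨⟨hx, hy⟩, hxy, hyx⟩, rfl⟩
    exact ⟨y, hx, hy, hxy, hyx⟩

theorem exists_isClosed_subsemigroup_mem_nhdsWithin_corner [TotallyDisconnectedSpace S]
    (he : IsIdempotentElem e) {U : Set S} (hU : U ∈ 𝓝[Subsemigroup.corner e] e) :
    ∃ Q : Subsemigroup S, IsClosed (Q : Set S) ∧ (Q : Set S) ⊆ Subsemigroup.corner e ∩ U ∧
      (Q : Set S) ∈ 𝓝[Subsemigroup.corner e] e := by
  obtain ⟨V, hV, heV, hVU⟩ := mem_nhdsWithin.1 hU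
  obtain ⟨N, hN, heN, hNV⟩ := compact_exists_isClopen_in_isOpen hV heV
  let K : Set S := N ∩ Subsemigroup.corner e
  have hK : IsCompact K := (hN.isClosed.inter (isClosed_corner e)).isCompact
  have heC : e ∈ Subsemigroup.corner e := (IsInverseAt.refl he).mem_left
  let Q : Subsemigroup S :=
    { carrier := {q | q ∈ Subsemigroup.corner e ∧ ∀ u ∈ K, u * q ∈ N}
      mul_mem' := fun {a b} ⟨haC, ha⟩ ⟨hbC, hb⟩ => ⟨mul_mem haC hbC, fun u hu =>
        mul_assoc u a b ▸ hb _ ⟨ha u hu, mul_mem hu.2 haC⟩⟩ }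
  have hQclosed : IsClosed (Q : Set S) := by
    have h : (Q : Set S) = (Subsemigroup.corner e : Set S) ∩ ⋂ u ∈ K, (u * ·) ⁻¹' N := by
      ext q
      simp [Q]
    rw [h]
    exact (isClosed_corner e).inter
      (isClosed_biInter fun u _ => hN.isClosed.preimage (continuous_const_mul u))
  have hQN : (Q : Set S) ⊆ N := fun q hq =>
    ((Subsemigroup.mem_corner_iff he).1 hq.1).1 ▸ hq.2 e ⟨heN, heC⟩
  have eventually_mul_mem : ∀ᶠ q in 𝓝 e, ∀ u ∈ K, u * q ∈ N := by
    refine hK.eventually_forall_of_forall_eventually fun u hu => ?_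
    have hc : Continuous fun p : S × S => p.2 * p.1 := by fun_prop
    refine hc.tendsto (e, u) (hN.isOpen.mem_nhds ?_)
    simpa only [((Subsemigroup.mem_corner_iff he).1 hu.2).2] using hu.1
  refine ⟨Q, hQclosed, fun q hq => ⟨hq.1, hVU ⟨hNV (hQN hq), hq.1⟩⟩, ?_⟩
  filter_upwards [mem_nhdsWithin_of_mem_nhds eventually_mul_mem, self_mem_nhdsWithin]
    with q hq hqC using ⟨hqC, hq⟩

theorem maximalSubgroup_mem_nhdsWithin_corner [TotallyDisconnectedSpace S] (he : IsIdempotentElem e)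
    (hE : ∀ᶠ f in 𝓝[Subsemigroup.corner e] e, IsIdempotentElem f → f = e) :
    maximalSubgroup e ∈ 𝓝[Subsemigroup.corner e] e := by
  obtain ⟨Q, hQ, hQE, hQe⟩ := exists_isClosed_subsemigroup_mem_nhdsWithin_corner he hE
  filter_upwards [hQe] with x hx
  obtain ⟨k, hk, hcomm, hidem⟩ := exists_commute_isIdempotentElem_mul hQ hx
  have hxk : x * k = e := (hQE (mul_mem hx hk)).2 hidem
  exact ⟨k, (hQE hx).1, (hQE hk).1, hxk, hcomm.eq ▸ hxk⟩

theorem exists_eventually_eq_of_countable {X : Type*} [TopologicalSpace X] [T2Space X] {K : Set X}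
    (hK : IsCompact K) (hcount : K.Countable) (hne : K.Nonempty) :
    ∃ x ∈ K, ∀ᶠ y in 𝓝[K] x, y = x := by
  have : CompactSpace K := isCompact_iff_compactSpace.1 hK
  have : Countable K := hcount.to_subtype
  have : Nonempty K := hne.to_subtype
  obtain ⟨x, y, hy⟩ := nonempty_interior_of_iUnion_of_closed (f := fun x : K => {x})
    (fun x => isClosed_singleton) (iUnion_of_singleton K)
  obtain rfl : y = x := interior_subset (s := {x}) hy
  refine ⟨y, y.2, ?_⟩
  rw [nhdsWithin_eq_map_subtype_coe y.2, eventually_map]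
  filter_upwards [mem_interior_iff_mem_nhds.1 hy] with z hz using congrArg _ hz

theorem eventually_eq_of_countable_maximalSubgroup (he : IsIdempotentElem e)
    (hH : maximalSubgroup e ∈ 𝓝[Subsemigroup.corner e] e) (hcount : (maximalSubgroup e).Countable) :
    ∀ᶠ x in 𝓝[Subsemigroup.corner e] e, x = e := by
  obtain ⟨x₀, ⟨y₀, hx₀⟩, hiso⟩ :=
    exists_eventually_eq_of_countable (isCompact_maximalSubgroup e) hcount ⟨e, e, .refl he⟩
  have hx₀e : x₀ * e = x₀ := ((Subsemigroup.mem_corner_iff he).1 hx₀.mem_left).2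
  have hlim : Tendsto (x₀ * ·) (𝓝[Subsemigroup.corner e] e) (𝓝[maximalSubgroup e] x₀) := by
    refine tendsto_nhdsWithin_iff.2 ⟨?_, ?_⟩
    · have h := (continuous_const_mul x₀).tendsto e
      rw [hx₀e] at h
      exact h.mono_left nhdsWithin_le_nhds
    · filter_upwards [hH] with x ⟨y, hx⟩ using ⟨_, hx₀.mul he hx⟩
  filter_upwards [hlim.eventually hiso, self_mem_nhdsWithin] with x hx hxC
  calc x = y₀ * (x₀ * x) := by
        rw [← mul_assoc, hx₀.mul_eq_symm, ((Subsemigroup.mem_corner_iff he).1 hxC).1]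
    _ = e := by rw [hx, hx₀.mul_eq_symm]

end InverseAt

/-! ### Subsemigroups with local inverses -/

section LocalInverses

/-- A subsemigroup `T` of a topological semigroup `S` has local inverses if, for each idempotent `e`
of `S`, it contains an inverse in the monoid `eSe` of every element of `eSe` close to `e`. This is
the condition under which `T` is shown to be all of `S` as soon as it contains generators. -/
def HasLocalInverses {S : Type*} [Semigroup S] [TopologicalSpace S] (T : Subsemigroup S) : Prop :=
  ∀ e : S, IsIdempotentElem e → ∀ᶠ x in 𝓝[Subsemigroup.corner e] e, ∃ y ∈ T, IsInverseAt e x y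

theorem HasLocalInverses.mem_of_isIdempotentElem {S : Type*} [Semigroup S] [TopologicalSpace S]
    {T : Subsemigroup S} (hT : HasLocalInverses T) {e : S} (he : IsIdempotentElem e) : e ∈ T := by
  obtain ⟨y, hyT, hy⟩ := (hT e he).self_of_nhdsWithin (IsInverseAt.refl he).mem_left
  have hye : y = e := by rw [← hy.mul_eq, ((Subsemigroup.mem_corner_iff he).1 hy.mem_right).1]
  exact hye ▸ hyT

variable {S : Type} [Semigroup S] [TopologicalSpace S] [ContinuousMul S] {A : Set S}
  {T : Subsemigroup S}

theorem HasLocalInverses.mem_of_isRegularElt (hT : HasLocalInverses T)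
    (hgen : Dense (Subsemigroup.closure A : Set S)) (hA : A ⊆ T) {s : S} (hs : IsRegularElt s) :
    s ∈ T := by
  obtain ⟨t, ht⟩ := hs
  have hst : s * t * s = s := ht.symm
  have hts_idem : IsIdempotentElem (t * s) := by
    rw [IsIdempotentElem, mul_assoc, ← mul_assoc s, hst]
  have hst_idem : IsIdempotentElem (s * t) := by
    rw [IsIdempotentElem, ← mul_assoc, hst]
  have hlim : Tendsto (fun w => t * s * (t * w) * (t * s)) (𝓝 s)
      (𝓝[Subsemigroup.corner (t * s)] (t * s)) :=
    (tendsto_mul_mul_nhdsWithin_corner hts_idem).comp ((continuous_const_mul t).tendsto s)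
  obtain ⟨w, hwA, y, hyT, hy⟩ := ((mem_closure_iff_frequently.1 (hgen s)).and_eventually
    (hlim.eventually (hT _ hts_idem))).exists
  have hwT : w ∈ T := Subsemigroup.closure_le.2 hA hwA
  have hs_eq : s = s * t * w * y := by
    calc s = s * (t * s) := by rw [← mul_assoc, hst]
      _ = s * (t * s * (t * w) * (t * s) * y) := by rw [hy.mul_eq]
      _ = s * t * (s * t) * w * (t * s * y) := by simp only [mul_assoc]
      _ = s * t * w * y := by
        rw [hst_idem.eq, ((Subsemigroup.mem_corner_iff hts_idem).1 hy.mem_right).1]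
  rw [hs_eq]
  exact mul_mem (mul_mem (hT.mem_of_isIdempotentElem hst_idem) hwT) hyT

theorem HasLocalInverses.eventually_mem_of_mul_eq_left (hT : HasLocalInverses T)
    (hgen : Dense (Subsemigroup.closure A : Set S)) (hA : A ⊆ T) {e : S}
    (he : IsIdempotentElem e) : ∀ᶠ n in 𝓝 e, n * e = n → n ∈ T := by
  filter_upwards [(tendsto_mul_mul_nhdsWithin_corner he).eventually (hT e he)] with n ⟨y, _, hy⟩ hne
  refine hT.mem_of_isRegularElt hgen hA ⟨y * e, ?_⟩
  calc n = n * (y * (e * n * e)) := by rw [hy.mul_eq_symm, hne]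
    _ = n * (y * e) * n := by rw [mul_assoc e, hne]; simp only [mul_assoc]

theorem HasLocalInverses.eventually_mem_of_mul_eq_right (hT : HasLocalInverses T)
    (hgen : Dense (Subsemigroup.closure A : Set S)) (hA : A ⊆ T) {e : S}
    (he : IsIdempotentElem e) : ∀ᶠ n in 𝓝 e, e * n = n → n ∈ T := by
  filter_upwards [(tendsto_mul_mul_nhdsWithin_corner he).eventually (hT e he)] with n ⟨y, _, hy⟩ hen
  refine hT.mem_of_isRegularElt hgen hA ⟨e * y, ?_⟩
  calc n = e * n * e * y * n := by rw [hy.mul_eq, hen]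
    _ = n * (e * y) * n := by rw [hen]; simp only [mul_assoc]

variable [CompactSpace S] [T2Space S]

theorem HasLocalInverses.eventually_mem_of_jLE (hT : HasLocalInverses T)
    (hgen : Dense (Subsemigroup.closure A : Set S)) (hA : A ⊆ T) {t : S} (ht : t ∈ T) :
    ∀ᶠ s in 𝓝 t, jLE s t → s ∈ T := by
  have hl {e : S} (he : IsIdempotentElem e) : ∀ᶠ n in 𝓝 e, n * e = n → n ∈ T :=
    hT.eventually_mem_of_mul_eq_left hgen hA he
  have hr {e : Sᵐᵒᵖ} (he : IsIdempotentElem e) : ∀ᶠ n in 𝓝 e, n * e = n → n.unop ∈ T := by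
    filter_upwards [(MulOpposite.continuous_unop.tendsto e).eventually
      (hT.eventually_mem_of_mul_eq_right hgen hA (congrArg MulOpposite.unop he))] with n hn hne
    exact hn (congrArg MulOpposite.unop hne)
  let := leftTranslation S
  let := rightTranslation S
  let := twoSidedTranslation S
  have hleft : ∀ᶠ s in 𝓝[MulAction.orbit S t] t, s ∈ T := by
    refine mem_nhdsWithin_orbit_of_eventually_smul_mem (continuous_mul_const t) fun e he => ?_
    filter_upwards [hl he] with n hn hne using mul_mem (hn hne) ht
  have hright : ∀ᶠ s in 𝓝[MulAction.orbit Sᵐᵒᵖ t] t, s ∈ T := by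
    refine mem_nhdsWithin_orbit_of_eventually_smul_mem
      ((continuous_const_mul t).comp MulOpposite.continuous_unop) fun e he => ?_
    filter_upwards [hr he] with n hn hne using mul_mem ht (hn hne)
  have hboth : ∀ᶠ s in 𝓝[MulAction.orbit (S × Sᵐᵒᵖ) t] t, s ∈ T := by
    refine mem_nhdsWithin_orbit_of_eventually_smul_mem
      (continuous_twoSidedTranslation t) fun e he => ?_
    filter_upwards [(continuous_fst.tendsto e).eventually (hl (congrArg Prod.fst he)),
      (continuous_snd.tendsto e).eventually (hr (congrArg Prod.snd he))] with n hn₁ hn₂ hne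
    exact mul_mem (mul_mem (hn₁ (congrArg Prod.fst hne)) ht) (hn₂ (congrArg Prod.snd hne))
  filter_upwards [eventually_nhdsWithin_iff.1 hleft, eventually_nhdsWithin_iff.1 hright,
    eventually_nhdsWithin_iff.1 hboth] with s hleft hright hboth
  rintro (rfl | ⟨x, hx⟩ | ⟨x, hx⟩ | ⟨x, y, hx⟩)
  · exact ht
  · exact hright ⟨.op x, hx.symm⟩
  · exact hleft ⟨x, hx.symm⟩
  · exact hboth ⟨(x, .op y), hx.symm⟩

theorem HasLocalInverses.exists_jLE_maximal_notMem (hT : HasLocalInverses T)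
    (hgen : Dense (Subsemigroup.closure A : Set S)) (hA : A ⊆ T) (hne : T ≠ ⊤) :
    ∃ s ∉ T, ∀ u ∉ T, jLE s u → jLE u s := by
  let := jPreorder S
  have : ClosedIciTopology S :=
    ⟨fun a => isClosed_setOf_jLE.preimage (by fun_prop : Continuous fun x : S => (a, x))⟩
  obtain ⟨s, hs, hmax⟩ := exists_maximal_mem_of_eventually_notMem (U := (T : Set S)ᶜ)
    (fun t ht => eventually_nhdsWithin_iff.2 <| by
      filter_upwards [hT.eventually_mem_of_jLE hgen hA (not_not.1 ht)] with s hs hst hsT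
      exact hsT (hs hst))
    (nonempty_compl.2 fun h => hne (SetLike.coe_injective h))
  exact ⟨s, hs, fun u hu => hmax hu⟩

end LocalInverses

/-! ### Cutting words at a generator -/

section Cuts

variable {S : Type*} [Semigroup S] {A : Set S}

theorem subsemigroup_closure_induction_left {p : (w : S) → w ∈ Subsemigroup.closure A → Prop}
    (mem : ∀ a (ha : a ∈ A), p a (Subsemigroup.subset_closure ha))
    (mul_left : ∀ a (ha : a ∈ A) w (hw : w ∈ Subsemigroup.closure A), p w hw →
      p (a * w) (mul_mem (Subsemigroup.subset_closure ha) hw)) {w : S}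
    (hw : w ∈ Subsemigroup.closure A) : p w hw := by
  suffices h : p w hw ∧ ∀ z (hz : z ∈ Subsemigroup.closure A), p z hz → p (w * z) (mul_mem hw hz)
    from h.1
  induction hw using Subsemigroup.closure_induction with
  | mem a ha => exact ⟨mem a ha, mul_left a ha⟩
  | mul x y _ hy ihx ihy =>
    refine ⟨ihx.2 y hy ihy.1, fun z hz hpz => ?_⟩
    simp only [mul_assoc]
    exact ihx.2 _ (mul_mem hy hz) (ihy.2 z hz hpz)

/-- The products `u * a * v` with `a ∈ A` such that the factorization `(u, a * v)` is in `P` and the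
factorization `(u * a, v)` is in `N`, where `u` or `v` may be empty, in which case the corresponding
condition is void. -/
def cutProducts (A : Set S) (P N : Set (S × S)) : Set S :=
  A ∪ (fun p : S × S => p.1 * p.2) '' {p | p.1 ∈ A ∧ p ∈ N} ∪
    (fun p : S × S => p.1 * p.2) '' {p | p.2 ∈ A ∧ p ∈ P} ∪
    (fun p : S × S × S => p.1 * p.2.1 * p.2.2) ''
      {p | p.2.1 ∈ A ∧ (p.1, p.2.1 * p.2.2) ∈ P ∧ (p.1 * p.2.1, p.2.2) ∈ N}

theorem closure_subset_cutProducts {P N : Set (S × S)} (hPN : P ∪ N = univ) :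
    (Subsemigroup.closure A : Set S) ⊆ cutProducts A P N := by
  have mem_N {p : S × S} (hp : p ∉ P) : p ∈ N := (hPN.ge (mem_univ p)).resolve_left hp
  have mul_mem_of_mem_P {w : S} (hw : w ∈ Subsemigroup.closure A) :
      ∀ u, (u, w) ∈ P → u * w ∈ cutProducts A P N := by
    induction hw using subsemigroup_closure_induction_left with
    | mem a ha => exact fun u hu => .inl (.inr ⟨(u, a), ⟨ha, hu⟩, rfl⟩)
    | mul_left a ha w _ ih =>
      intro u hu
      by_cases huw : (u * a, w) ∈ P
      · exact mul_assoc u a w ▸ ih _ huw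
      · exact .inr ⟨(u, a, w), ⟨ha, hu, mem_N huw⟩, mul_assoc u a w⟩
  intro w hw
  induction hw using subsemigroup_closure_induction_left with
  | mem a ha => exact .inl (.inl (.inl ha))
  | mul_left a ha w hw _ =>
    by_cases haw : (a, w) ∈ P
    · exact mul_mem_of_mem_P hw a haw
    · exact .inl (.inl (.inr ⟨(a, w), ⟨ha, mem_N haw⟩, rfl⟩))

variable [TopologicalSpace S] [ContinuousMul S] [CompactSpace S] [T2Space S]

theorem isClosed_cutProducts (hA : IsClosed A) {P N : Set (S × S)} (hP : IsClosed P)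
    (hN : IsClosed N) : IsClosed (cutProducts A P N) := by
  have isClosed_image {X : Type _} [TopologicalSpace X] [CompactSpace X] {f : X → S}
      (hf : Continuous f) {K : Set X} (hK : IsClosed K) : IsClosed (f '' K) :=
    (hK.isCompact.image hf).isClosed
  refine ((hA.union (isClosed_image (by fun_prop) ?_)).union
    (isClosed_image (by fun_prop) ?_)).union (isClosed_image (by fun_prop) ?_)
  · exact (hA.preimage continuous_fst).inter hN
  · exact (hA.preimage continuous_snd).inter hP
  · exact (hA.preimage (by fun_prop : Continuous fun p : S × S × S => p.2.1)).inter
      ((hP.preimage (by fun_prop : Continuous fun p : S × S × S => (p.1, p.2.1 * p.2.2))).inter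
        (hN.preimage (by fun_prop : Continuous fun p : S × S × S => (p.1 * p.2.1, p.2.2))))

theorem mem_of_disjoint_factorizations (hA : IsClosed A)
    (hgen : Dense (Subsemigroup.closure A : Set S)) {T : Subsemigroup S} (hAT : A ⊆ T)
    {D₁ D₂ : Set (S × S)} (hD₁ : IsClosed D₁) (hD₂ : IsClosed D₂) (hdisj : Disjoint D₁ D₂) {s : S}
    (hs₁ : ∀ u v, u * v = s → u ∉ T → (u, v) ∈ D₁)
    (hs₂ : ∀ u v, u * v = s → v ∉ T → (u, v) ∈ D₂) : s ∈ T := by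
  obtain ⟨V, hV, hDV, hVD⟩ :=
    normal_exists_closure_subset hD₂ hD₁.isOpen_compl hdisj.subset_compl_left
  have hcover : closure V ∪ Vᶜ = univ :=
    univ_subset_iff.1 (union_compl_self V ▸ union_subset_union_left _ subset_closure)
  have left_mem {u v : S} (huv : u * v = s) (hV : (u, v) ∈ closure V) : u ∈ T :=
    by_contra fun hu => hVD hV (hs₁ u v huv hu)
  have right_mem {u v : S} (huv : u * v = s) (hV : (u, v) ∈ Vᶜ) : v ∈ T :=
    by_contra fun hv => hV (hDV (hs₂ u v huv hv))
  have hs : s ∈ cutProducts A (closure V) Vᶜ :=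
    closure_minimal (closure_subset_cutProducts hcover)
      (isClosed_cutProducts hA isClosed_closure hV.isClosed_compl) (hgen s)
  obtain ((hs | ⟨⟨a, v⟩, ⟨ha, hav⟩, hs⟩) | ⟨⟨u, a⟩, ⟨ha, hua⟩, hs⟩) |
    ⟨⟨u, a, v⟩, ⟨ha, huav, hnuav⟩, hs⟩ := hs
  · exact hAT hs
  · exact hs ▸ mul_mem (hAT ha) (right_mem hs hav)
  · exact hs ▸ mul_mem (left_mem hs hua) (hAT ha)
  · exact hs ▸ mul_mem (mul_mem (left_mem ((mul_assoc u a v).symm.trans hs) huav) (hAT ha))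
      (right_mem hs hnuav)

end Cuts

/-! ### Algebraic generation -/

section Generation

variable {S : Type} [Semigroup S] [TopologicalSpace S] [ContinuousMul S] [CompactSpace S]
  [T2Space S] {T : Subsemigroup S}

theorem HasLocalInverses.eq_top (hT : HasLocalInverses T) {A : Set S} (hA : IsClosed A)
    (hgen : Dense (Subsemigroup.closure A : Set S)) (hAT : A ⊆ T) : T = ⊤ := by
  by_contra hne
  obtain ⟨s, hsT, hmax⟩ := hT.exists_jLE_maximal_notMem hgen hAT hne
  have isClosed_factorizations {f : S × S → S} (hf : Continuous f) :
      IsClosed {p : S × S | p.1 * p.2 = s ∧ jLE (f p) s} :=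
    (isClosed_eq (by fun_prop) continuous_const).inter
      (isClosed_setOf_jLE.preimage (by fun_prop : Continuous fun p => (f p, s)))
  have hdisj : Disjoint {p : S × S | p.1 * p.2 = s ∧ jLE p.1 s}
      {p : S × S | p.1 * p.2 = s ∧ jLE p.2 s} := by
    rw [disjoint_left]
    rintro ⟨u, v⟩ ⟨rfl, hu⟩ ⟨-, hv⟩
    exact hsT (hT.mem_of_isRegularElt hgen hAT (isRegularElt_mul_of_jLE hu hv))
  refine hsT (mem_of_disjoint_factorizations hA hgen hAT (isClosed_factorizations continuous_fst)
    (isClosed_factorizations continuous_snd) hdisj ?_ ?_)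
  · exact fun u v huv hu => ⟨huv, hmax u hu (.inr (.inl ⟨v, huv.symm⟩))⟩
  · exact fun u v huv hv => ⟨huv, hmax v hv (.inr (.inr (.inl ⟨u, huv.symm⟩)))⟩

variable [TotallyDisconnectedSpace S]

theorem hasLocalInverses_of_isGroupElt_mem
    (hE : ∀ e : S, IsIdempotentElem e →
      ∀ᶠ f in 𝓝[Subsemigroup.corner e] e, IsIdempotentElem f → f = e)
    (hT : ∀ s, IsGroupElt S s → s ∈ T) : HasLocalInverses T := by
  intro e he
  filter_upwards [maximalSubgroup_mem_nhdsWithin_corner he (hE e he)] with x ⟨y, hxy⟩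
  exact ⟨y, hT y ⟨_, isSgpSubgroup_maximalSubgroup he, x, hxy.symm⟩, hxy⟩

theorem hasLocalInverses_of_isIdempotentElem_mem
    (hE : ∀ e : S, IsIdempotentElem e →
      ∀ᶠ f in 𝓝[Subsemigroup.corner e] e, IsIdempotentElem f → f = e)
    (hG : ∀ G, IsSgpSubgroup S G → G.Countable)
    (hT : ∀ e, IsIdempotentElem e → e ∈ T) : HasLocalInverses T := by
  intro e he
  filter_upwards [eventually_eq_of_countable_maximalSubgroup he
    (maximalSubgroup_mem_nhdsWithin_corner he (hE e he))
    (hG _ (isSgpSubgroup_maximalSubgroup he))] with x hx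
  exact ⟨e, hT e he, hx.symm ▸ .refl he⟩

end Generation

theorem finManyRegJ_algebraically_generated_general
    (S : Type) [Semigroup S] [TopologicalSpace S] [ContinuousMul S] [CompactSpace S] [T2Space S]
    [TotallyDisconnectedSpace S] (A : Set S) (hA : IsClosed A) (hgen : TopGen S A)
    (hE : ∀ e : S, IsIdempotentElem e →
      ∀ᶠ f in 𝓝[Subsemigroup.corner e] e, IsIdempotentElem f → f = e) :
    (Subsemigroup.closure (A ∪ {s : S | IsGroupElt S s}) : Set S) = Set.univ ∧
      ((∀ G, IsSgpSubgroup S G → G.Countable) →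
        (Subsemigroup.closure (A ∪ {e : S | e * e = e}) : Set S) = Set.univ) := by
  have closure_union_eq_univ {B : Set S} (hB : HasLocalInverses (Subsemigroup.closure (A ∪ B))) :
      (Subsemigroup.closure (A ∪ B) : Set S) = Set.univ := by
    rw [hB.eq_top hA (dense_iff_closure_eq.2 hgen)
      (subset_union_left.trans Subsemigroup.subset_closure), Subsemigroup.coe_top]
  exact ⟨closure_union_eq_univ (hasLocalInverses_of_isGroupElt_mem hE
      fun s hs => Subsemigroup.subset_closure (.inr hs)),
    fun hG => closure_union_eq_univ (hasLocalInverses_of_isIdempotentElem_mem hE hG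
      fun e he => Subsemigroup.subset_closure (.inr he))⟩

/-- A finitely generated profinite semigroup with finitely many regular
`J`-classes is algebraically generated by the generators together with the group
elements; if moreover there are only countably many group elements, it is algebraically
generated by the generators together with the idempotents. -/
theorem finManyRegJ_algebraically_generated
    (S : Type) [Semigroup S] [TopologicalSpace S] (hS : IsProfiniteSgp S)
    (A : Set S) (hA : A.Finite) (hgen : TopGen S A) (hJ : FinManyRegJ S) :
    (Subsemigroup.closure (A ∪ {s : S | IsGroupElt S s}) : Set S) = Set.univ ∧
      ({s : S | IsGroupElt S s}.Countable →
        (Subsemigroup.closure (A ∪ {e : S | e * e = e}) : Set S) = Set.univ) := by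
  obtain ⟨_, _, _, _⟩ := hS
  obtain ⟨hgroup, hidem⟩ := finManyRegJ_algebraically_generated_general S A hA.isClosed hgen
    fun e he => hJ.eventually_idempotent_eq he
  refine ⟨hgroup, fun hG => hidem fun G hsub => hG.mono fun s hs => ?_⟩
  exact (⟨G, hsub, hs⟩ : IsGroupElt S s)
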